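/- Let Γ be a 3-homogeneous access structure on 7 players satisfying monotonicity, no-cloning and no-redundancy, and suppose there exists a pure QSS state for Γ. Then |Γ_min| = 7 and every 2-element subset of {1,…,7} is contained in exactly one set of Γ_min; that is, Γ_min is a Fano plane. -/

import Mathlib

open Finset

/-- Monotonicity of an access structure on `n` players (players = `Fin n`). -/
def Monotonic {n : ℕ} (Γ : Finset (Fin n) → Prop) : Prop :=
  ∀ A B : Finset (Fin n), Γ A → A ⊆ B → Γ B

/-- No-cloning: a set is authorized iff its complement is not. -/
def NoCloning {n : ℕ} (Γ : Finset (Fin n) → Prop) : Prop :=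
  ∀ A : Finset (Fin n), Γ A ↔ ¬ Γ Aᶜ

/-- `A` is a minimal authorized set of `Γ`. -/
def IsMinimal {n : ℕ} (Γ : Finset (Fin n) → Prop) (A : Finset (Fin n)) : Prop :=
  Γ A ∧ ∀ B : Finset (Fin n), B ⊂ A → ¬ Γ B

/-- No-redundancy: every player lies in some minimal authorized set. -/
def NoRedundancy {n : ℕ} (Γ : Finset (Fin n) → Prop) : Prop :=
  ∀ i : Fin n, ∃ A : Finset (Fin n), IsMinimal Γ A ∧ i ∈ A

noncomputable section

/-- Combine an assignment on `A` and one on `Aᶜ` into a full bit string. -/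
def glue {m : ℕ} (A : Finset (Fin m)) (u : {x // x ∈ A} → Fin 2)
    (w : {x // x ∈ Aᶜ} → Fin 2) : Fin m → Fin 2 :=
  fun x => if h : x ∈ A then u ⟨x, h⟩ else w ⟨x, Finset.mem_compl.mpr h⟩

/-- Reduced density matrix of the pure state `ψ` on the qubit positions in `A`:
the partial trace over the positions outside `A` of `ψψ†`. -/
def reducedDensity {m : ℕ} (ψ : (Fin m → Fin 2) → ℂ) (A : Finset (Fin m)) :
    Matrix ({x // x ∈ A} → Fin 2) ({x // x ∈ A} → Fin 2) ℂ :=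
  fun u v => ∑ w : {x // x ∈ Aᶜ} → Fin 2,
    ψ (glue A u w) * (starRingEnd ℂ) (ψ (glue A v w))

/-- The reduction of `ψ` to `A` is maximally mixed, i.e. equals `2^{-|A|} · I`. -/
def MaximallyMixed {m : ℕ} (ψ : (Fin m → Fin 2) → ℂ) (A : Finset (Fin m)) : Prop :=
  reducedDensity ψ A =
    ((2 : ℂ) ^ A.card)⁻¹ •
      (1 : Matrix ({x // x ∈ A} → Fin 2) ({x // x ∈ A} → Fin 2) ℂ)

open Classical in
/-- Von Neumann entropy (natural logarithm): sum of `-λ log λ` over the eigenvalues. -/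
def vnEntropy {ι : Type} [Fintype ι] [DecidableEq ι] (ρ : Matrix ι ι ℂ) : ℝ :=
  if h : ρ.IsHermitian then ∑ i, Real.negMulLog (h.eigenvalues i) else 0

/-- Entropy of the reduction of `ψ` to the set `A` of qubit positions. -/
def Sent {m : ℕ} (ψ : (Fin m → Fin 2) → ℂ) (A : Finset (Fin m)) : ℝ :=
  vnEntropy (reducedDensity ψ A)

/-- The qubit positions (in `{0,1,…,n} = Fin (n+1)`, where `0` is the reference qubit)
of a set of players `A ⊆ Fin n`: player `i` holds position `i.succ`. -/
def posOf {n : ℕ} (A : Finset (Fin n)) : Finset (Fin (n + 1)) := A.image Fin.succ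

/-- `ψ` is a pure QSS state for the access structure `Γ`: a normalized pure state of
`n+1` qubits (position `0` being the reference qubit `R`) satisfying Recoverability
`S(R) + S(A) - S(R ∪ A) = 2 log 2` for authorized `A` and Secrecy
`S(R) + S(B) - S(R ∪ B) = 0` for unauthorized `B`. -/
structure IsPureQSSState {n : ℕ} (Γ : Finset (Fin n) → Prop)
    (ψ : (Fin (n + 1) → Fin 2) → ℂ) : Prop where
  normalized : ∑ x : Fin (n + 1) → Fin 2, ‖ψ x‖ ^ 2 = 1
  recover : ∀ A : Finset (Fin n), Γ A →
    Sent ψ {0} + Sent ψ (posOf A) - Sent ψ (insert 0 (posOf A)) = 2 * Real.log 2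
  secrecy : ∀ B : Finset (Fin n), ¬ Γ B →
    Sent ψ {0} + Sent ψ (posOf B) - Sent ψ (insert 0 (posOf B)) = 0

end


section Entropy
open Matrix Kronecker ComplexOrder

theorem ent_roots {ι : Type} [Fintype ι] [DecidableEq ι] (ρ : Matrix ι ι ℂ) (h : ρ.IsHermitian) :
    vnEntropy ρ = (ρ.charpoly.roots.map (fun z => Real.negMulLog z.re)).sum := by
  rw [vnEntropy, dif_pos h, h.roots_charpoly_eq_eigenvalues, Multiset.map_map]
  rw [Finset.sum]; simp [Function.comp_def, -Finset.sum_map_val]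

theorem ent_congr {ι κ : Type} [Fintype ι] [DecidableEq ι] [Fintype κ] [DecidableEq κ]
    (ρ : Matrix ι ι ℂ) (σ : Matrix κ κ ℂ) (h : ρ.IsHermitian) (h' : σ.IsHermitian)
    (hc : ρ.charpoly = σ.charpoly) : vnEntropy ρ = vnEntropy σ := by
  rw [ent_roots ρ h, ent_roots σ h', hc]

theorem ent_diagonal {ι : Type} [Fintype ι] [DecidableEq ι] (ρ : Matrix ι ι ℂ)
    (h : ρ.IsHermitian) (d : ι → ℝ)
    (hc : ρ.charpoly = (diagonal (fun i => (d i : ℂ))).charpoly) :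
    vnEntropy ρ = ∑ i, Real.negMulLog (d i) := by
  rw [ent_roots ρ h, hc, charpoly_diagonal, Polynomial.roots_prod]
  · rw [Finset.sum]; simp [Function.comp_def, -Finset.sum_map_val]
  · simp [Finset.prod_ne_zero_iff, Polynomial.X_sub_C_ne_zero]

theorem ent_mul_comm {ι κ : Type} [Fintype ι] [DecidableEq ι] [Fintype κ] [DecidableEq κ]
    (M : Matrix ι κ ℂ) : vnEntropy (M * Mᴴ) = vnEntropy (Mᴴ * M) := by
  rw [ent_roots _ (isHermitian_mul_conjTranspose_self M),
    ent_roots _ (isHermitian_conjTranspose_mul_self M)]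
  have h := congrArg (fun p : Polynomial ℂ =>
    (p.roots.map (fun z => Real.negMulLog z.re)).sum) (charpoly_mul_comm' M Mᴴ)
  rw [Polynomial.roots_mul, Polynomial.roots_mul] at h
  · simpa [Multiset.map_nsmul, Multiset.sum_nsmul] using h
  · exact mul_ne_zero (pow_ne_zero _ Polynomial.X_ne_zero) (charpoly_monic _).ne_zero
  · exact mul_ne_zero (pow_ne_zero _ Polynomial.X_ne_zero) (charpoly_monic _).ne_zero

theorem diag_lemma {ι : Type} [Fintype ι] [DecidableEq ι] (M : Matrix ι ι ℂ)
    (h : M.PosSemidef) :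
    vnEntropy M ≤ ∑ j, Real.negMulLog (M j j).re ∧
    (∑ j, Real.negMulLog (M j j).re ≤ vnEntropy M →
      M = diagonal (fun j => (((M j j).re : ℝ) : ℂ))) := by
  set p := h.1.eigenvalues with hp
  set U : Matrix ι ι ℂ := (h.1.eigenvectorUnitary : Matrix ι ι ℂ) with hU
  have hU1 : U * Uᴴ = 1 := by
    rw [← star_eq_conjTranspose]; exact Unitary.coe_mul_star_self h.1.eigenvectorUnitary
  have hU2 : Uᴴ * U = 1 := by
    rw [← star_eq_conjTranspose]; exact Unitary.coe_star_mul_self h.1.eigenvectorUnitary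
  have hM : M = U * diagonal (fun i => (p i : ℂ)) * Uᴴ := by
    have := h.1.spectral_theorem
    rw [Unitary.conjStarAlgAut_apply] at this
    exact this
  have hp0 : ∀ i, 0 ≤ p i := h.eigenvalues_nonneg
  let c : ι → ι → ℝ := fun j i => Complex.normSq (U j i)
  have hc0 : ∀ j i, 0 ≤ c j i := fun j i => Complex.normSq_nonneg _
  have hr : ∀ j, ∑ i, c j i = 1 := by
    intro j
    have := congrFun (congrFun hU1 j) j
    rw [mul_apply] at this
    simp only [conjTranspose_apply, RCLike.star_def, Complex.mul_conj, one_apply_eq] at this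
    exact_mod_cast this
  have hcol : ∀ i, ∑ j, c j i = 1 := by
    intro i
    have := congrFun (congrFun hU2 i) i
    rw [mul_apply] at this
    simp only [conjTranspose_apply, RCLike.star_def, one_apply_eq, mul_comm, Complex.mul_conj] at this
    exact_mod_cast this
  have hd : ∀ j, M j j = ((∑ i, c j i * p i : ℝ) : ℂ) := by
    intro j
    rw [hM, mul_apply]
    simp only [mul_diagonal, conjTranspose_apply, RCLike.star_def]
    push_cast
    refine Finset.sum_congr rfl fun i _ => ?_
    rw [← Complex.mul_conj]; ring
  have hd' : ∀ j, (M j j).re = ∑ i, c j i * p i := by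
    intro j; rw [hd j, Complex.ofReal_re]
  have hS : vnEntropy M = ∑ j, ∑ i, c j i * Real.negMulLog (p i) := by
    rw [vnEntropy, dif_pos h.1, Finset.sum_comm]
    refine Finset.sum_congr rfl fun i _ => ?_
    rw [← Finset.sum_mul, hcol, one_mul]
  have hJ : ∀ j, ∑ i, c j i * Real.negMulLog (p i) ≤ Real.negMulLog (M j j).re := by
    intro j
    rw [hd']
    exact Real.concaveOn_negMulLog.le_map_sum (fun i _ => hc0 j i) (hr j) (fun i _ => hp0 i)
  refine ⟨?_, ?_⟩
  · rw [hS]; exact Finset.sum_le_sum fun j _ => hJ j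
  · intro hle
    have heq : ∀ j ∈ Finset.univ, ∑ i, c j i * Real.negMulLog (p i) = Real.negMulLog (M j j).re := by
      rw [← Finset.sum_eq_sum_iff_of_le fun j _ => hJ j]
      rw [hS] at hle
      exact le_antisymm (Finset.sum_le_sum fun j _ => hJ j) hle
    have hpe : ∀ j i, U j i * (p i : ℂ) = ((M j j).re : ℂ) * U j i := by
      intro j i
      by_cases hz : U j i = 0
      · simp [hz]
      · have hj := heq j (Finset.mem_univ j)
        rw [hd'] at hj
        have := (Real.strictConcaveOn_negMulLog.map_sum_eq_iff' (t := Finset.univ)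
          (w := c j) (p := p)
          (fun i _ => hc0 j i) (hr j) (fun i _ => hp0 i)).1 (by simpa using hj.symm)
        have h2 := this i (Finset.mem_univ i) (by simpa [c] using hz)
        rw [hd']
        simp only [smul_eq_mul] at h2
        rw [← h2]; ring
    have : U * diagonal (fun i => (p i : ℂ)) = diagonal (fun j => (((M j j).re : ℝ) : ℂ)) * U := by
      ext j i
      rw [mul_diagonal, diagonal_mul]; exact hpe j i
    conv_lhs => rw [hM, this, Matrix.mul_assoc, hU1, Matrix.mul_one]

theorem negMulLog_two (a b : ℝ) (ha : 0 ≤ a) (hb : 0 ≤ b) :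
    Real.negMulLog a + Real.negMulLog b ≤ (a + b) * Real.log 2 + Real.negMulLog (a + b) ∧
    ((a + b) * Real.log 2 + Real.negMulLog (a + b) ≤ Real.negMulLog a + Real.negMulLog b →
      a = b) := by
  have key : (a + b) * Real.log 2 + Real.negMulLog (a + b) = 2 * Real.negMulLog ((a+b)/2) := by
    by_cases h : a + b = 0
    · simp [h]
    · rw [Real.negMulLog, Real.negMulLog, Real.log_div h (by norm_num)]; ring
  rw [key]
  have e : (1/2:ℝ) • a + (1/2:ℝ) • b = (a+b)/2 := by simp; ring
  constructor
  · have := Real.concaveOn_negMulLog.2 (Set.mem_Ici.2 ha) (Set.mem_Ici.2 hb)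
      (show (0:ℝ) ≤ 1/2 by norm_num) (show (0:ℝ) ≤ 1/2 by norm_num) (by norm_num)
    rw [e] at this
    simp only [smul_eq_mul] at this
    linarith
  · intro hle
    by_contra hne
    have := Real.strictConcaveOn_negMulLog.2 (Set.mem_Ici.2 ha) (Set.mem_Ici.2 hb) hne
      (show (0:ℝ) < 1/2 by norm_num) (show (0:ℝ) < 1/2 by norm_num) (by norm_num)
    rw [e] at this
    simp only [smul_eq_mul] at this
    linarith

theorem qubit_lemma {ι : Type} [Fintype ι] [DecidableEq ι]
    (ρ : Matrix (Fin 2 × ι) (Fin 2 × ι) ℂ) (σ : Matrix ι ι ℂ) (h : ρ.PosSemidef)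
    (hσ : σ.IsHermitian)
    (htr : σ.trace = 1) (hpt : ∀ u v, σ u v = ∑ s, ρ (s, u) (s, v)) :
    vnEntropy ρ ≤ Real.log 2 + vnEntropy σ ∧
    (Real.log 2 + vnEntropy σ = vnEntropy ρ ↔
      ρ = (1 : Matrix (Fin 2) (Fin 2) ℂ) ⊗ₖ ((1 / 2 : ℂ) • σ)) := by
  set q := hσ.eigenvalues with hq
  set W : Matrix ι ι ℂ := (hσ.eigenvectorUnitary : Matrix ι ι ℂ) with hW
  have hW1 : W * Wᴴ = 1 := by
    rw [← star_eq_conjTranspose]; exact Unitary.coe_mul_star_self hσ.eigenvectorUnitary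
  have hW2 : Wᴴ * W = 1 := by
    rw [← star_eq_conjTranspose]; exact Unitary.coe_star_mul_self hσ.eigenvectorUnitary
  have hS : σ = W * diagonal (fun i => (q i : ℂ)) * Wᴴ := by
    have := hσ.spectral_theorem
    rw [Unitary.conjStarAlgAut_apply] at this
    exact this
  have hS' : Wᴴ * σ * W = diagonal (fun i => (q i : ℂ)) := by
    rw [hS]
    calc _ = (Wᴴ * W) * diagonal (fun i => (q i : ℂ)) * (Wᴴ * W) := by
          simp only [Matrix.mul_assoc]
      _ = _ := by rw [hW2]; simp
  have hqs : ∑ t, q t = 1 := by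
    have := hσ.trace_eq_sum_eigenvalues
    rw [htr] at this
    have h2 : ((∑ t, q t : ℝ) : ℂ) = 1 := by push_cast; exact this.symm
    exact_mod_cast h2
  set V : Matrix (Fin 2 × ι) (Fin 2 × ι) ℂ := (1 : Matrix (Fin 2) (Fin 2) ℂ) ⊗ₖ W with hV
  have hVh : Vᴴ = (1 : Matrix (Fin 2) (Fin 2) ℂ) ⊗ₖ Wᴴ := by
    rw [hV, conjTranspose_kronecker]; simp
  have hV1 : V * Vᴴ = 1 := by
    rw [hVh, hV, ← mul_kronecker_mul, hW1]; simp
  have hV2 : Vᴴ * V = 1 := by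
    rw [hVh, hV, ← mul_kronecker_mul, hW2]; simp
  set M := Vᴴ * ρ * V with hM
  have hMρ : V * M * Vᴴ = ρ := by
    calc V * M * Vᴴ = (V * Vᴴ) * ρ * (V * Vᴴ) := by simp only [hM, Matrix.mul_assoc]
      _ = ρ := by rw [hV1]; simp
  have hMps : M.PosSemidef := h.conjTranspose_mul_mul_same V
  have hMc : ρ.charpoly = M.charpoly := by
    rw [hM, charpoly_mul_comm, ← Matrix.mul_assoc, hV1, Matrix.one_mul]
  have hE : vnEntropy ρ = vnEntropy M := ent_congr _ _ h.1 hMps.1 hMc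
  have hMe : ∀ s t, M (s, t) (s, t) = ∑ v, ∑ u, star (W u t) * ρ (s, u) (s, v) * W v t := by
    intro s t
    rw [hM, hVh, hV, mul_apply, Fintype.sum_prod_type]
    simp only [mul_apply, Fintype.sum_prod_type, kronecker_apply, one_apply, conjTranspose_apply]
    simp [Finset.sum_mul]
  have hMd : ∀ t, ∑ s, M (s, t) (s, t) = (q t : ℂ) := by
    intro t
    have := congrFun (congrFun hS' t) t
    rw [diagonal_apply_eq] at this
    rw [← this]
    simp only [hMe, mul_apply, conjTranspose_apply, hpt, Finset.mul_sum, Finset.sum_mul]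
    rw [Finset.sum_comm]
    refine Finset.sum_congr rfl fun v _ => ?_
    rw [Finset.sum_comm]
  have hMd' : ∀ t, (M (0, t) (0, t)).re + (M (1, t) (1, t)).re = q t := by
    intro t
    have := congrArg Complex.re (hMd t)
    simpa [Fin.sum_univ_two] using this
  have hM0 : ∀ x, 0 ≤ (M x x).re := fun x => (Complex.le_def.1 (hMps.diag_nonneg (i := x))).1
  have hsum : ∑ x, Real.negMulLog (M x x).re =
      ∑ t, (Real.negMulLog (M (0, t) (0, t)).re + Real.negMulLog (M (1, t) (1, t)).re) := by
    rw [Fintype.sum_prod_type_right]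
    simp [Fin.sum_univ_two]
  have hR : Real.log 2 + vnEntropy σ = ∑ t, (q t * Real.log 2 + Real.negMulLog (q t)) := by
    rw [Finset.sum_add_distrib, ← Finset.sum_mul, hqs, one_mul, vnEntropy, dif_pos hσ]
  have hle : ∀ t, Real.negMulLog (M (0, t) (0, t)).re + Real.negMulLog (M (1, t) (1, t)).re ≤
      q t * Real.log 2 + Real.negMulLog (q t) := by
    intro t
    rw [← hMd']
    exact (negMulLog_two _ _ (hM0 _) (hM0 _)).1
  obtain ⟨d1, d2⟩ := diag_lemma M hMps
  have hτ : Vᴴ * ((1 : Matrix (Fin 2) (Fin 2) ℂ) ⊗ₖ ((1 / 2 : ℂ) • σ)) * V =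
      diagonal (fun x : Fin 2 × ι => ((q x.2 / 2 : ℝ) : ℂ)) := by
    rw [hVh, hV, ← mul_kronecker_mul, ← mul_kronecker_mul]
    have : Wᴴ * ((1 / 2 : ℂ) • σ) * W = diagonal (fun i => ((q i / 2 : ℝ) : ℂ)) := by
      rw [Matrix.mul_smul, Matrix.smul_mul, hS']
      ext i j
      by_cases hij : i = j
      · subst hij; simp; ring
      · simp [hij]
    rw [this, Matrix.one_mul, Matrix.one_mul, ← diagonal_one, diagonal_kronecker_diagonal]
    simp
  refine ⟨?_, ?_, ?_⟩
  · rw [hE, hR]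
    refine d1.trans ?_
    rw [hsum]
    exact Finset.sum_le_sum fun t _ => hle t
  · intro heq
    rw [hE, hR] at heq
    have h1 : ∑ t, (Real.negMulLog (M (0, t) (0, t)).re + Real.negMulLog (M (1, t) (1, t)).re) =
        ∑ t, (q t * Real.log 2 + Real.negMulLog (q t)) :=
      le_antisymm (Finset.sum_le_sum fun t _ => hle t) (by rw [heq, ← hsum]; exact d1)
    have h2 := (Finset.sum_eq_sum_iff_of_le fun t _ => hle t).1 h1
    have h3 := d2 (by rw [hsum, h1, heq])
    have h4 : ∀ t, (M (0, t) (0, t)).re = (M (1, t) (1, t)).re := by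
      intro t
      have := h2 t (Finset.mem_univ t)
      rw [← hMd'] at this
      exact (negMulLog_two _ _ (hM0 _) (hM0 _)).2 this.ge
    have h5 : ∀ x : Fin 2 × ι, (M x x).re = q x.2 / 2 := by
      rintro ⟨s, t⟩
      have a1 := h4 t
      have a2 := hMd' t
      fin_cases s <;> simp <;> linarith
    have h6 : M = diagonal (fun x : Fin 2 × ι => ((q x.2 / 2 : ℝ) : ℂ)) := by
      rw [h3]; congr 1; ext x; rw [h5]
    rw [← hτ] at h6
    rw [← hMρ, h6]
    calc _ = (V * Vᴴ) * ((1 : Matrix (Fin 2) (Fin 2) ℂ) ⊗ₖ ((1 / 2 : ℂ) • σ)) * (V * Vᴴ) := by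
          simp only [Matrix.mul_assoc]
      _ = _ := by rw [hV1]; simp
  · intro heq
    rw [ent_diagonal ρ h.1 (fun x : Fin 2 × ι => q x.2 / 2) (by rw [hMc, hM, ← hτ, ← heq]), hR,
      Fintype.sum_prod_type_right]
    refine Finset.sum_congr rfl fun t _ => ?_
    simp only [Fin.sum_univ_two]
    by_cases hz : q t = 0
    · simp [hz]
    · rw [Real.negMulLog, Real.negMulLog, Real.log_div hz (by norm_num)]; ring

end Entropy

section States
open Matrix Kronecker ComplexOrder

def ampMat {m : ℕ} (ψ : (Fin m → Fin 2) → ℂ) (A : Finset (Fin m)) :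
    Matrix ({x // x ∈ A} → Fin 2) ({x // x ∈ Aᶜ} → Fin 2) ℂ :=
  fun u w => ψ (glue A u w)

theorem red_eq {m : ℕ} (ψ : (Fin m → Fin 2) → ℂ) (A : Finset (Fin m)) :
    reducedDensity ψ A = ampMat ψ A * (ampMat ψ A)ᴴ := by
  ext u v
  rw [mul_apply]
  rfl

theorem red_psd {m : ℕ} (ψ : (Fin m → Fin 2) → ℂ) (A : Finset (Fin m)) :
    (reducedDensity ψ A).PosSemidef := by
  rw [red_eq]; exact posSemidef_self_mul_conjTranspose _

def resA {m : ℕ} (A : Finset (Fin m)) (x : Fin m → Fin 2) : {x // x ∈ A} → Fin 2 :=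
  fun i => x i

def extA {m : ℕ} (A : Finset (Fin m)) (u : {x // x ∈ A} → Fin 2) : Fin m → Fin 2 :=
  fun i => if h : i ∈ A then u ⟨i, h⟩ else 0

theorem res_ext {m : ℕ} (A : Finset (Fin m)) (u : {x // x ∈ A} → Fin 2) :
    resA A (extA A u) = u := by
  funext i; simp [resA, extA]

def Qd {m : ℕ} (ψ : (Fin m → Fin 2) → ℂ) (A : Finset (Fin m)) (x y : Fin m → Fin 2) : ℂ :=
  reducedDensity ψ A (resA A x) (resA A y)

def ov {m : ℕ} (A : Finset (Fin m)) (x z : Fin m → Fin 2) : Fin m → Fin 2 :=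
  fun i => if i ∈ A then x i else z i

theorem Qd_eq {m : ℕ} (ψ : (Fin m → Fin 2) → ℂ) (A : Finset (Fin m)) (x y : Fin m → Fin 2) :
    Qd ψ A x y = ∑ z : Fin m → Fin 2, if (∀ i ∈ A, z i = x i) then
      ψ z * (starRingEnd ℂ) (ψ (ov A y z)) else 0 := by
  rw [← Finset.sum_filter, Qd, reducedDensity]
  refine Finset.sum_bij' (fun w _ => glue A (resA A x) w) (fun z _ => resA Aᶜ z) ?_ ?_ ?_ ?_ ?_
  · intro w _
    simp only [Finset.mem_filter, Finset.mem_univ, true_and]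
    intro i hi
    simp [glue, hi, resA]
  · intros; simp
  · intro w _
    funext i
    have : i.1 ∉ A := Finset.mem_compl.1 i.2
    simp [glue, resA, this]
  · intro z hz
    simp only [Finset.mem_filter, Finset.mem_univ, true_and] at hz
    funext i
    by_cases hi : i ∈ A
    · simp [glue, hi, resA, hz i hi]
    · simp [glue, hi, resA]
  · intro w _
    congr 3
    funext i
    by_cases hi : i ∈ A
    · simp [glue, ov, hi, resA]
    · simp [glue, ov, hi]

theorem Qd_trace {m : ℕ} (ψ : (Fin m → Fin 2) → ℂ) (B : Finset (Fin m)) (i : Fin m)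
    (hi : i ∉ B) (x y : Fin m → Fin 2) :
    Qd ψ B x y = ∑ s : Fin 2, Qd ψ (insert i B) (Function.update x i s) (Function.update y i s) := by
  simp only [Qd_eq]
  rw [Finset.sum_comm]
  refine Finset.sum_congr rfl fun z _ => ?_
  rw [Finset.sum_eq_single (z i)]
  · have h1 : (∀ j ∈ insert i B, z j = Function.update x i (z i) j) ↔ ∀ j ∈ B, z j = x j := by
      constructor
      · intro h j hj
        have := h j (Finset.mem_insert_of_mem hj)
        rwa [Function.update_of_ne (by rintro rfl; exact hi hj)] at this
      · intro h j hj
        by_cases hji : j = i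
        · subst hji; simp
        · rw [Function.update_of_ne hji]
          exact h j ((Finset.mem_insert.1 hj).resolve_left hji)
    have h2 : ov (insert i B) (Function.update y i (z i)) z = ov B y z := by
      funext j
      by_cases hji : j = i
      · subst hji; simp [ov, hi]
      · simp [ov, hji]
    simp only [h1, h2]
  · intro s _ hs
    rw [if_neg]
    intro h
    have := h i (Finset.mem_insert_self i B)
    simp at this
    exact hs this.symm
  · simp

theorem Qd_congr {m : ℕ} (ψ : (Fin m → Fin 2) → ℂ) (B : Finset (Fin m)) 
    (x y x' y' : Fin m → Fin 2) (hx : ∀ i ∈ B, x i = x' i) (hy : ∀ i ∈ B, y i = y' i) :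
    Qd ψ B x y = Qd ψ B x' y' := by
  have h1 : resA B x = resA B x' := by funext i; exact hx i i.2
  have h2 : resA B y = resA B y' := by funext i; exact hy i i.2
  rw [Qd, Qd, h1, h2]

/-- qubit `i` is maximally mixed and uncorrelated with `B` -/
def Free {m : ℕ} (ψ : (Fin m → Fin 2) → ℂ) (i : Fin m) (B : Finset (Fin m)) : Prop :=
  ∀ x y, Qd ψ (insert i B) x y = if x i = y i then (1 / 2 : ℂ) * Qd ψ B x y else 0

theorem Free.erase {m : ℕ} {ψ : (Fin m → Fin 2) → ℂ} {i j : Fin m} {B : Finset (Fin m)}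
    (h : Free ψ i (insert j B)) (hij : i ≠ j) (hj : j ∉ B) : Free ψ i B := by
  intro x y
  rw [Qd_trace ψ (insert i B) j (by simp [hij.symm, hj]), Qd_trace ψ B j hj, Finset.insert_comm]
  simp only [h _ _, Function.update_of_ne hij]
  by_cases hxy : x i = y i
  · simp [hxy, mul_add]
  · simp [hxy]

theorem Free.mono {m : ℕ} {ψ : (Fin m → Fin 2) → ℂ} {i : Fin m} {B C : Finset (Fin m)}
    (h : Free ψ i B) (hi : i ∉ B) (hC : C ⊆ B) : Free ψ i C := by
  have gen : ∀ D : Finset (Fin m), Disjoint D C → i ∉ D → Free ψ i (D ∪ C) → Free ψ i C := by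
    intro D
    induction D using Finset.induction_on with
    | empty => intro _ _ h; simpa using h
    | insert l D hl ih2 =>
      intro hd hiD hf
      rw [Finset.disjoint_insert_left] at hd
      refine ih2 hd.2 (fun h => hiD (Finset.mem_insert_of_mem h)) ?_
      rw [Finset.insert_union] at hf
      exact hf.erase (by rintro rfl; simp at hiD) (by simp [hl, hd.1])
  refine gen (B \ C) Finset.sdiff_disjoint (by simp [hi]) ?_
  rw [Finset.sdiff_union_of_subset hC]; exact h

def insEquiv {m : ℕ} (B : Finset (Fin m)) (i : Fin m) (hi : i ∉ B) :
    (Fin 2 × ({x // x ∈ B} → Fin 2)) ≃ ({x // x ∈ insert i B} → Fin 2) where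
  toFun p := resA (insert i B) (Function.update (extA B p.2) i p.1)
  invFun w := (w ⟨i, Finset.mem_insert_self i B⟩, fun j => w ⟨j, Finset.mem_insert_of_mem j.2⟩)
  left_inv := by
    rintro ⟨s, u⟩
    ext1
    · simp [resA]
    · funext j
      have : j.1 ≠ i := by rintro h; exact hi (h ▸ j.2)
      simp [resA, extA, this]
  right_inv := by
    intro w
    funext j
    by_cases h : j.1 = i
    · obtain ⟨j, hj⟩ := j
      simp only at h
      subst h
      simp [resA]
    · have : j.1 ∈ B := (Finset.mem_insert.1 j.2).resolve_left h
      simp [resA, extA, h, this]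

theorem red_trace {m : ℕ} (ψ : (Fin m → Fin 2) → ℂ) (hn : ∑ x, ‖ψ x‖ ^ 2 = 1)
    (B : Finset (Fin m)) : (reducedDensity ψ B).trace = 1 := by
  have h1 : ∑ x, ψ x * (starRingEnd ℂ) (ψ x) = 1 := by
    simp only [Complex.mul_conj, Complex.normSq_eq_norm_sq]
    exact_mod_cast hn
  rw [← h1, Matrix.trace]
  simp only [diag_apply, reducedDensity]
  rw [← Fintype.sum_prod_type']
  refine Finset.sum_bij' (fun p _ => glue B p.1 p.2) (fun z _ => (resA B z, resA Bᶜ z)) ?_ ?_ ?_ ?_ ?_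
  · intros; simp
  · intros; simp
  · rintro ⟨u, w⟩ _
    ext1
    · funext i; simp [glue, resA]
    · funext i
      have : i.1 ∉ B := Finset.mem_compl.1 i.2
      simp [glue, resA, this]
  · intro z _
    funext i
    by_cases hi : i ∈ B <;> simp [glue, resA, hi]
  · intros; rfl

theorem sent_insert {m : ℕ} (ψ : (Fin m → Fin 2) → ℂ) (hn : ∑ x, ‖ψ x‖ ^ 2 = 1)
    (B : Finset (Fin m)) (i : Fin m) (hi : i ∉ B) :
    Sent ψ (insert i B) ≤ Real.log 2 + Sent ψ B ∧
    (Real.log 2 + Sent ψ B = Sent ψ (insert i B) ↔ Free ψ i B) := by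
  set e := insEquiv B i hi
  set ρ := (reducedDensity ψ (insert i B)).submatrix e e with hρ
  have hpsd : ρ.PosSemidef := (red_psd ψ _).submatrix e
  have hent : vnEntropy ρ = Sent ψ (insert i B) := by
    refine ent_congr _ _ hpsd.1 (red_psd ψ _).1 ?_
    have := charpoly_reindex e.symm (reducedDensity ψ (insert i B))
    simpa [reindex_apply] using this
  have hρe : ∀ s u t v, ρ (s, u) (t, v) = Qd ψ (insert i B) (Function.update (extA B u) i s)
      (Function.update (extA B v) i t) := fun _ _ _ _ => rfl
  have hσe : ∀ u v, reducedDensity ψ B u v = Qd ψ B (extA B u) (extA B v) := by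
    intro u v; rw [Qd, res_ext, res_ext]
  have key := qubit_lemma ρ (reducedDensity ψ B) hpsd (red_psd ψ B).1 (red_trace ψ hn B) (by
    intro u v
    rw [hσe, Qd_trace ψ B i hi]
    rfl)
  rw [hent] at key
  refine ⟨key.1, key.2.trans ?_⟩
  have hB : ∀ j ∈ B, j ≠ i := by rintro j hj rfl; exact hi hj
  constructor
  · intro h x y
    have h1 := congrFun (congrFun h (x i, resA B x)) (y i, resA B y)
    rw [hρe] at h1
    rw [Qd_congr ψ (insert i B) x y _ _ ?_ ?_, h1]
    · simp only [kronecker_apply, one_apply, Matrix.smul_apply, smul_eq_mul, ite_mul, one_mul, zero_mul]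
      rfl
    · intro j hj
      rcases Finset.mem_insert.1 hj with rfl | hj
      · simp
      · simp [hB j hj, extA, hj, resA]
    · intro j hj
      rcases Finset.mem_insert.1 hj with rfl | hj
      · simp
      · simp [hB j hj, extA, hj, resA]
  · intro h
    ext ⟨s, u⟩ ⟨t, v⟩
    rw [hρe, h]
    simp only [kronecker_apply, one_apply, Matrix.smul_apply, smul_eq_mul, ite_mul, one_mul, zero_mul,
      Function.update_self]
    rw [hσe]
    congr 2
    refine Qd_congr _ _ _ _ _ _ ?_ ?_ <;>
    · intro j hj
      simp [hB j hj]

theorem sent_compl {m : ℕ} (ψ : (Fin m → Fin 2) → ℂ) (A : Finset (Fin m)) :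
    Sent ψ A = Sent ψ Aᶜ := by
  rw [Sent, red_eq, ent_mul_comm, Sent]
  refine ent_congr _ _ (isHermitian_conjTranspose_mul_self _) (red_psd ψ _).1 ?_
  rw [← charpoly_transpose]
  congr 1
  ext u v
  rw [transpose_apply, mul_apply, reducedDensity]
  refine Finset.sum_bij' (fun w _ => fun j => w ⟨j, by simpa using j.2⟩)
    (fun w _ => fun j => w ⟨j, by simpa using j.2⟩) ?_ ?_ ?_ ?_ ?_
  · intros; simp
  · intros; simp
  · intros; rfl
  · intros; rfl
  · intro w _
    have hg : ∀ u : {x // x ∈ Aᶜ} → Fin 2,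
        glue A w u = glue Aᶜ u (fun j => w ⟨j, by simpa using j.2⟩) := by
      intro u
      funext i
      by_cases hi : i ∈ A <;> simp [glue, hi]
    rw [conjTranspose_apply, ampMat, ampMat, hg, hg, mul_comm]
    rfl

theorem sent_empty {m : ℕ} (ψ : (Fin m → Fin 2) → ℂ) (hn : ∑ x, ‖ψ x‖ ^ 2 = 1) :
    Sent ψ ∅ = 0 := by
  have h := red_trace ψ hn ∅
  have hH := (red_psd ψ ∅).1
  rw [hH.trace_eq_sum_eigenvalues] at h
  rw [Sent, vnEntropy, dif_pos hH]
  have hu : ∀ a b : ({x : Fin m // x ∈ (∅ : Finset (Fin m))} → Fin 2), a = b := by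
    intro a b; funext i; exact absurd i.2 (Finset.notMem_empty _)
  refine Finset.sum_eq_zero fun i _ => ?_
  rw [Finset.sum_eq_single i (fun j _ hj => absurd (hu j i) hj) (fun h => absurd (Finset.mem_univ i) h)] at h
  have h2 : ((hH.eigenvalues i : ℝ) : ℂ) = 1 := h
  have : hH.eigenvalues i = 1 := by exact_mod_cast h2
  rw [this, Real.negMulLog_one]

end States

section Quantum

theorem posOf_insert {n : ℕ} (i : Fin n) (A : Finset (Fin n)) :
    posOf (insert i A) = insert i.succ (posOf A) := by
  simp [posOf, Finset.image_insert]

theorem mem_posOf {n : ℕ} (i : Fin n) (A : Finset (Fin n)) : i.succ ∈ posOf A ↔ i ∈ A := by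
  simp [posOf]

theorem zero_posOf {n : ℕ} (A : Finset (Fin n)) : (0 : Fin (n+1)) ∉ posOf A := by
  simp [posOf]

theorem posOf_compl {n : ℕ} (A : Finset (Fin n)) : (posOf A)ᶜ = insert 0 (posOf Aᶜ) := by
  ext x
  refine Fin.cases ?_ (fun i => ?_) x
  · simp [zero_posOf]
  · simp [mem_posOf]

theorem posOf_mono {n : ℕ} {A B : Finset (Fin n)} (h : A ⊆ B) : posOf A ⊆ posOf B :=
  Finset.image_subset_image h

variable {n : ℕ} {Γ : Finset (Fin n) → Prop} {ψ : (Fin (n + 1) → Fin 2) → ℂ}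

theorem sent_R (hψ : IsPureQSSState Γ ψ) (hu : Γ Finset.univ) : Sent ψ {0} = Real.log 2 := by
  have h := hψ.recover _ hu
  have h1 : Sent ψ (insert 0 (posOf (Finset.univ : Finset (Fin n)))) = 0 := by
    rw [sent_compl, ← sent_empty ψ hψ.normalized]
    congr 1
    rw [← Finset.compl_empty, ← posOf_compl, compl_compl]
    simp [posOf]
  have h2 : Sent ψ (posOf (Finset.univ : Finset (Fin n))) = Sent ψ {0} := by
    rw [sent_compl, posOf_compl]
    simp [posOf]
  rw [h1, h2] at h
  linarith

theorem free_of_minimal (hψ : IsPureQSSState Γ ψ) (hu : Γ Finset.univ) (hnc : NoCloning Γ)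
    (A : Finset (Fin n)) (hA : IsMinimal Γ A) (i : Fin n) (hi : i ∈ A) :
    Free ψ i.succ (posOf (A.erase i)) ∧ Free ψ i.succ (posOf Aᶜ) := by
  have hR := sent_R hψ hu
  have h1 := hψ.secrecy (A.erase i) (hA.2 _ (Finset.erase_ssubset hi))
  have h2 := hψ.secrecy Aᶜ ((hnc A).1 hA.1)
  have e1 : Sent ψ (insert 0 (posOf (A.erase i))) = Sent ψ (insert i.succ (posOf Aᶜ)) := by
    rw [sent_compl, ← posOf_insert]
    congr 1
    rw [← Finset.compl_erase, compl_eq_comm, posOf_compl, compl_compl]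
  have e2 : Sent ψ (insert 0 (posOf Aᶜ)) = Sent ψ (insert i.succ (posOf (A.erase i))) := by
    rw [← posOf_compl, ← sent_compl, ← posOf_insert, Finset.insert_erase hi]
  obtain ⟨f1, g1⟩ := sent_insert ψ hψ.normalized (posOf (A.erase i)) i.succ (by simp [mem_posOf])
  obtain ⟨f2, g2⟩ := sent_insert ψ hψ.normalized (posOf Aᶜ) i.succ (by simp [mem_posOf, hi])
  rw [e1, hR] at h1
  rw [e2, hR] at h2
  exact ⟨g1.1 (by linarith), g2.1 (by linarith)⟩

theorem free_step (hψ : IsPureQSSState Γ ψ) (i : Fin n) (A B : Finset (Fin n)) 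
    (h : Free ψ i.succ (posOf A)) (hi : i ∉ A) (hB : B ⊆ A) :
    Sent ψ (posOf (insert i B)) = Real.log 2 + Sent ψ (posOf B) := by
  rw [posOf_insert]
  exact ((sent_insert ψ hψ.normalized (posOf B) i.succ
    (by rw [mem_posOf]; exact fun h => hi (hB h))).2.2
    (h.mono (by rwa [mem_posOf]) (posOf_mono hB))).symm

theorem sent_pair (hψ : IsPureQSSState Γ ψ) (hu : Γ Finset.univ) (hnc : NoCloning Γ)
    (hnr : NoRedundancy Γ) (u v : Fin n) (huv : u ≠ v) :
    Sent ψ (posOf {u, v}) = 2 * Real.log 2 := by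
  have key : ∀ u v : Fin n, u ≠ v → Sent ψ (posOf {u, v}) = Real.log 2 + Sent ψ (posOf {v}) ∧
      Sent ψ (posOf {u}) = Real.log 2 + Sent ψ (posOf (∅ : Finset (Fin n))) := by
    intro u v huv
    obtain ⟨A, hA, huA⟩ := hnr u
    obtain ⟨h1, h2⟩ := free_of_minimal hψ hu hnc A hA u huA
    refine ⟨?_, free_step hψ u _ ∅ h1 (by simp) (by simp)⟩
    by_cases hv : v ∈ A
    · exact free_step hψ u _ {v} h1 (by simp) (by simp [hv, huv.symm])
    · exact free_step hψ u _ {v} h2 (by simp [huA]) (by simp [hv])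
  rw [(key u v huv).1, (key v u huv.symm).2]
  have : posOf (∅ : Finset (Fin n)) = ∅ := by simp [posOf]
  rw [this, sent_empty ψ hψ.normalized]
  ring

theorem no_three {Γ : Finset (Fin 7) → Prop} {ψ : (Fin (7 + 1) → Fin 2) → ℂ}
    (hψ : IsPureQSSState Γ ψ) (hu : Γ Finset.univ) (hnc : NoCloning Γ)
    (hnr : NoRedundancy Γ) (i j a b c : Fin 7) (hd : ({i, j, a, b, c} : Finset (Fin 7)).card = 5)
    (ha : IsMinimal Γ {i, j, a}) (hb : IsMinimal Γ {i, j, b}) (hc : IsMinimal Γ {i, j, c}) :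
    False := by
  have hc2 : ({i, j, a, b, c} : Finset (Fin 7))ᶜ.card = 2 := by
    rw [Finset.card_compl, hd]; rfl
  obtain ⟨u, v, huv, hT⟩ := Finset.card_eq_two.1 hc2
  have hnd : [i, j, a, b, c].Nodup := by
    rw [← Multiset.coe_nodup, ← Multiset.toFinset_card_eq_card_iff_nodup]
    simpa using hd
  have hmem : ∀ x, x ∈ ({u, v} : Finset (Fin 7)) ↔ ¬ (x = i ∨ x = j ∨ x = a ∨ x = b ∨ x = c) := by
    intro x; rw [← hT]; simp
  simp at hnd hmem
  have hu1 := (hmem u).1 (Or.inl rfl)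
  have hv1 := (hmem v).1 (Or.inr rfl)
  have fa := (free_of_minimal hψ hu hnc _ ha a (by simp)).2
  have fb := (free_of_minimal hψ hu hnc _ hb b (by simp)).2
  have fc := (free_of_minimal hψ hu hnc _ hc c (by simp)).2
  have s1 := free_step hψ a _ {b, c, u, v} fa (by simp) (by
    intro x hx; simp at hx ⊢; grind)
  have s2 := free_step hψ b _ {c, u, v} fb (by simp) (by
    intro x hx; simp at hx ⊢; grind)
  have s3 := free_step hψ c _ {u, v} fc (by simp) (by
    intro x hx; simp at hx ⊢; grind)
  have s4 := sent_pair hψ hu hnc hnr u v huv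
  have hS : Sent ψ (posOf {a, b, c, u, v}) = Sent ψ (insert 0 (posOf {i, j})) := by
    rw [sent_compl, posOf_compl]
    refine congrArg (fun T => Sent ψ (insert 0 (posOf T))) ?_
    ext x
    have := hmem x
    simp
    grind
  have t1 := (sent_insert ψ hψ.normalized (posOf {i, j}) 0 (zero_posOf _)).1
  have t2 := (sent_insert ψ hψ.normalized (posOf {j}) i.succ (by rw [mem_posOf]; grind)).1
  have t3 := (sent_insert ψ hψ.normalized (posOf ∅) j.succ (by rw [mem_posOf]; simp)).1
  rw [← posOf_insert] at t2 t3
  have e0 : posOf (∅ : Finset (Fin 7)) = ∅ := by simp [posOf]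
  have e1 : insert j (∅ : Finset (Fin 7)) = {j} := rfl
  rw [e0, sent_empty ψ hψ.normalized, e1] at t3
  have hl : 0 < Real.log 2 := Real.log_pos (by norm_num)
  linarith

end Quantum

section Comb

theorem exists_min {Γ : Finset (Fin 7) → Prop} (A : Finset (Fin 7)) (h : Γ A) :
    ∃ B ⊆ A, IsMinimal Γ B := by
  induction A using Finset.strongInduction with
  | H A ih =>
    by_cases hm : IsMinimal Γ A
    · exact ⟨A, Finset.Subset.refl _, hm⟩
    · have : ∃ B, B ⊂ A ∧ Γ B := by
        by_contra hcon
        push Not at hcon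
        exact hm ⟨h, hcon⟩
      obtain ⟨B, hB, hΓ⟩ := this
      obtain ⟨C, hC, hCm⟩ := ih B hB hΓ
      exact ⟨C, hC.trans hB.1, hCm⟩

/-- abstract combinatorial hypotheses on the family of triples -/
structure Trip (E : Finset (Fin 7) → Prop) : Prop where
  card : ∀ s, E s → s.card = 3
  inter : ∀ s t, E s → E t → ¬ Disjoint s t
  comp : ∀ s : Finset (Fin 7), s.card = 3 → ¬ E s → ∃ t, t ⊆ sᶜ ∧ E t
  cov : ∀ i, ∃ s, E s ∧ i ∈ s
  three : ∀ i j a b c : Fin 7, ({i, j, a, b, c} : Finset (Fin 7)).card = 5 →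
    E {i, j, a} → E {i, j, b} → E {i, j, c} → False

theorem trip_of (Γ : Finset (Fin 7) → Prop)
    (hmono : Monotonic Γ) (hnc : NoCloning Γ) (hnr : NoRedundancy Γ)
    (hhom : ∀ A : Finset (Fin 7), IsMinimal Γ A → A.card = 3)
    (ψ : (Fin (7 + 1) → Fin 2) → ℂ) (hψ : IsPureQSSState Γ ψ) : Trip (IsMinimal Γ) := by
  have hu : Γ Finset.univ := by
    obtain ⟨A, hA, _⟩ := hnr 0
    exact hmono A _ hA.1 (Finset.subset_univ _)
  refine ⟨hhom, ?_, ?_, hnr, no_three hψ hu hnc hnr⟩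
  · intro s t hs ht hd
    refine (hnc s).1 hs.1 (hmono t _ ht.1 ?_)
    rw [Finset.subset_compl_iff_disjoint_left]
    exact hd
  · intro s hs hns
    refine exists_min sᶜ ?_
    by_contra hcon
    have hΓ : Γ s := (hnc s).2 hcon
    obtain ⟨B, hB, hBm⟩ := exists_min s hΓ
    have : B = s := Finset.eq_of_subset_of_card_le hB (by rw [hs, hhom B hBm])
    exact hns (this ▸ hBm)

theorem trip_map {E : Finset (Fin 7) → Prop} (h : Trip E) (f : Equiv.Perm (Fin 7)) :
    Trip (fun s => E (s.map f.toEmbedding)) := by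
  refine ⟨?_, ?_, ?_, ?_, ?_⟩
  · intro s hs
    simpa using h.card _ hs
  · intro s t hs ht hd
    exact h.inter _ _ hs ht ((Finset.disjoint_map _).2 hd)
  · intro s hs hns
    obtain ⟨t, ht, hE⟩ := h.comp _ (by simpa using hs) hns
    refine ⟨t.map f.symm.toEmbedding, ?_, ?_⟩
    · intro x hx
      simp only [Finset.mem_map_equiv, Equiv.symm_symm] at hx
      have := ht hx
      simpa using this
    · simpa [Finset.map_map] using hE
  · intro i
    obtain ⟨s, hs, hi⟩ := h.cov (f i)
    refine ⟨s.map f.symm.toEmbedding, ?_, ?_⟩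
    · simpa [Finset.map_map] using hs
    · simpa [Finset.mem_map_equiv] using hi
  · intro i j a b c hd ha hb hc
    simp only [Finset.map_insert, Finset.map_singleton] at ha hb hc
    refine h.three _ _ _ _ _ ?_ ha hb hc
    have e := Finset.card_map f.toEmbedding (s := {i, j, a, b, c})
    rw [hd] at e
    simpa only [Finset.map_insert, Finset.map_singleton] using e

def Cfg (x y z : Fin 7) : Prop := (x = 4 ∧ y = 5 ∧ z = 6) ∨ (x = 4 ∧ y = 6 ∧ z = 5) ∨
      (x = 5 ∧ y = 6 ∧ z = 4)

theorem dec_one : ∀ t : Finset (Fin 7), t ⊆ ({2, 3, 0} : Finset (Fin 7))ᶜ → t.card = 3 →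
    ∀ x y z : Fin 7, Cfg x y z →
    ¬ Disjoint {2, 3, x} t → ¬ Disjoint {2, 3, y} t →
    ¬ Disjoint {0, 1, 2} t → t = {1, x, y} := by
  intro t ht hc x y z hx
  rcases hx with ⟨rfl, rfl, rfl⟩ | ⟨rfl, rfl, rfl⟩ | ⟨rfl, rfl, rfl⟩ <;>
  · revert t; decide +kernel

theorem dec_two : ∀ t : Finset (Fin 7), t ⊆ ({2, 3, 1} : Finset (Fin 7))ᶜ → t.card = 3 →
    ∀ x y z : Fin 7, Cfg x y z →
    ¬ Disjoint {2, 3, x} t → ¬ Disjoint {2, 3, y} t →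
    ¬ Disjoint {0, 1, 2} t → t = {0, x, y} := by
  intro t ht hc x y z hx
  rcases hx with ⟨rfl, rfl, rfl⟩ | ⟨rfl, rfl, rfl⟩ | ⟨rfl, rfl, rfl⟩ <;>
  · revert t; decide +kernel

theorem dec_three : ∀ s : Finset (Fin 7), s.card = 3 →
    ∀ x y z : Fin 7, Cfg x y z → z ∈ s →
    ¬ Disjoint {2, 3, x} s → ¬ Disjoint {2, 3, y} s →
    ¬ Disjoint {0, 1, 2} s → ¬ Disjoint {0, 1, 3} s → ¬ Disjoint {1, x, y} s →
    ¬ Disjoint {0, x, y} s → False := by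
  intro t hc x y z hx
  rcases hx with ⟨rfl, rfl, rfl⟩ | ⟨rfl, rfl, rfl⟩ | ⟨rfl, rfl, rfl⟩ <;>
  · revert t; decide +kernel

theorem dec_four (w : Fin 7) (hw : w = 4 ∨ w = 5 ∨ w = 6) : ∀ t : Finset (Fin 7),
    t ⊆ ({0, 1, w} : Finset (Fin 7))ᶜ → t.card = 3 →
    ¬ Disjoint {0, 1, 2} t → ¬ Disjoint {0, 1, 3} t →
    ∃ x, t = {2, 3, x} ∧ x ≠ w ∧ (x = 4 ∨ x = 5 ∨ x = 6) := by
  rcases hw with rfl | rfl | rfl <;> decide +kernel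

theorem trip_step {E : Finset (Fin 7) → Prop} (h : Trip E) (h1 : E {0, 1, 2}) (h2 : E {0, 1, 3})
    (x y z : Fin 7) (hx : Cfg x y z) (h3 : E {2, 3, x}) (h4 : E {2, 3, y}) : False := by
  have n0 : ¬ E {2, 3, 0} := fun h5 => h.three 2 3 x y 0 (by
    rcases hx with ⟨rfl, rfl, rfl⟩ | ⟨rfl, rfl, rfl⟩ | ⟨rfl, rfl, rfl⟩ <;> decide) h3 h4 h5
  have n1 : ¬ E {2, 3, 1} := fun h5 => h.three 2 3 x y 1 (by
    rcases hx with ⟨rfl, rfl, rfl⟩ | ⟨rfl, rfl, rfl⟩ | ⟨rfl, rfl, rfl⟩ <;> decide) h3 h4 h5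
  obtain ⟨t, ht, hE⟩ := h.comp _ (by decide) n0
  obtain ⟨t', ht', hE'⟩ := h.comp _ (by decide) n1
  obtain ⟨s, hs, hz⟩ := h.cov z
  have a := dec_one t ht (h.card _ hE) x y z hx (h.inter _ _ h3 hE) (h.inter _ _ h4 hE)
    (h.inter _ _ h1 hE)
  have a' := dec_two t' ht' (h.card _ hE') x y z hx (h.inter _ _ h3 hE') (h.inter _ _ h4 hE')
    (h.inter _ _ h1 hE')
  subst a a'
  exact dec_three s (h.card _ hs) x y z hx hz (h.inter _ _ h3 hs) (h.inter _ _ h4 hs)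
    (h.inter _ _ h1 hs) (h.inter _ _ h2 hs) (h.inter _ _ hE hs) (h.inter _ _ hE' hs)

theorem trip_false {E : Finset (Fin 7) → Prop} (h : Trip E) (h1 : E {0, 1, 2})
    (h2 : E {0, 1, 3}) : False := by
  have key : ∀ w : Fin 7, w = 4 ∨ w = 5 ∨ w = 6 → ∃ x, E {2, 3, x} ∧ x ≠ w ∧
      (x = 4 ∨ x = 5 ∨ x = 6) := by
    intro w hw
    have hn : ¬ E {0, 1, w} := fun h5 => h.three 0 1 2 3 w (by
      rcases hw with rfl | rfl | rfl <;> decide) h1 h2 h5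
    obtain ⟨t, ht, hE⟩ := h.comp _ (by rcases hw with rfl | rfl | rfl <;> decide) hn
    have ct := h.card _ hE
    have a1 := h.inter _ _ h1 hE
    have a2 := h.inter _ _ h2 hE
    have := dec_four w hw t ht ct a1 a2
    obtain ⟨x, rfl, hx⟩ := this
    exact ⟨x, hE, hx⟩
  obtain ⟨x, hx, hx4, hx'⟩ := key 4 (by simp)
  obtain ⟨y, hy, hyx, hy'⟩ := key x hx'
  have hc : ∃ z : Fin 7, Cfg x y z ∨ Cfg y x z := by
    unfold Cfg
    clear hx hy key
    revert x y
    decide +kernel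
  obtain ⟨z, hc | hc⟩ := hc
  · exact trip_step h h1 h2 x y z hc hx hy
  · exact trip_step h h1 h2 y x z hc hy hx

theorem exists_perm4 (g : Fin 4 → Fin 7) (hg : Function.Injective g) :
    ∃ f : Equiv.Perm (Fin 7), ∀ k : Fin 4, f (Fin.castLE (by norm_num) k) = g k := by
  have := Equiv.Perm.isMultiplyPretransitive (Fin 7) 4
  obtain ⟨f, hf⟩ := MulAction.exists_smul_eq (Equiv.Perm (Fin 7))
    (Fin.castLEEmb (by norm_num) : Fin 4 ↪ Fin 7) ⟨g, hg⟩
  exact ⟨f, fun k => DFunLike.congr_fun hf k⟩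

theorem trip_linear {E : Finset (Fin 7) → Prop} (h : Trip E) (s t : Finset (Fin 7)) (hs : E s)
    (ht : E t) (hst : s ≠ t) : (s ∩ t).card ≤ 1 := by
  by_contra hcon
  have cs := h.card s hs
  have ct := h.card t ht
  have hlt : (s ∩ t).card < 3 := by
    by_contra h3
    have e1 : s ∩ t = s := Finset.eq_of_subset_of_card_le Finset.inter_subset_left (by omega)
    have e2 : s ∩ t = t := Finset.eq_of_subset_of_card_le Finset.inter_subset_right (by omega)
    exact hst (e1.symm.trans e2)
  have h2 : (s ∩ t).card = 2 := by omega
  obtain ⟨p, q, hpq, hI⟩ := Finset.card_eq_two.1 h2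
  have d1 : (s \ t).card = 1 := by
    have := Finset.card_sdiff_add_card_inter s t; omega
  have d2 : (t \ s).card = 1 := by
    have := Finset.card_sdiff_add_card_inter t s; rw [Finset.inter_comm] at this; omega
  obtain ⟨c, hc⟩ := Finset.card_eq_one.1 d1
  obtain ⟨d, hd⟩ := Finset.card_eq_one.1 d2
  have mI : ∀ x, (x ∈ s ∧ x ∈ t) ↔ (x = p ∨ x = q) := fun x => by
    rw [← Finset.mem_inter, hI]; simp
  have mc : ∀ x, (x ∈ s ∧ x ∉ t) ↔ x = c := fun x => by
    rw [← Finset.mem_sdiff, hc]; simp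
  have md : ∀ x, (x ∈ t ∧ x ∉ s) ↔ x = d := fun x => by
    rw [← Finset.mem_sdiff, hd]; simp
  have hse : s = {p, q, c} := by
    ext x; have := mI x; have := mc x; simp; tauto
  have hte : t = {p, q, d} := by
    ext x; have := mI x; have := md x; simp; tauto
  have hinj : Function.Injective ![p, q, c, d] := by
    have := mI p; have := mI q; have := mc c; have := md d
    have hpc : p ≠ c := by rintro rfl; tauto
    have hpd : p ≠ d := by rintro rfl; tauto
    have hqc : q ≠ c := by rintro rfl; tauto
    have hqd : q ≠ d := by rintro rfl; tauto
    have hcd : c ≠ d := by rintro rfl; tauto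
    intro a b
    fin_cases a <;> fin_cases b <;> simp [*, Ne.symm, eq_comm]
  obtain ⟨f, hf'⟩ := exists_perm4 _ hinj
  have f0 : f 0 = p := hf' 0
  have f1 : f 1 = q := hf' 1
  have f2 : f 2 = c := hf' 2
  have f3 : f 3 = d := hf' 3
  refine trip_false (trip_map h f) ?_ ?_
  · simpa [Finset.map_insert, f0, f1, f2, ← hse] using hs
  · simpa [Finset.map_insert, f0, f1, f3, ← hte] using ht

open Classical in
set_option maxHeartbeats 1000000 in
theorem trip_final {E : Finset (Fin 7) → Prop} (h : Trip E) :
    {A : Finset (Fin 7) | E A}.ncard = 7 ∧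
    ∀ P : Finset (Fin 7), P.card = 2 → ∃! A : Finset (Fin 7), E A ∧ P ⊆ A := by
  set F : Finset (Finset (Fin 7)) := Finset.univ.filter E with hF
  have mF : ∀ s, s ∈ F ↔ E s := fun s => by simp [hF]
  have c7 : F.card = 7 := by
    have hterm : ∀ s ∈ Finset.powersetCard 3 (Finset.univ : Finset (Fin 7)),
        (if s ∈ F then 1 else 0) + (F.filter (fun t => t ⊆ sᶜ)).card = 1 := by
      intro s hs
      have cs : s.card = 3 := (Finset.mem_powersetCard.1 hs).2
      by_cases hsE : E s
      · have : F.filter (fun t => t ⊆ sᶜ) = ∅ := by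
          refine Finset.filter_eq_empty_iff.2 fun t ht hts => ?_
          rw [Finset.subset_compl_iff_disjoint_left] at hts
          exact h.inter s t hsE ((mF t).1 ht) hts
        rw [this, if_pos ((mF s).2 hsE)]; rfl
      · rw [if_neg (fun hh => hsE ((mF s).1 hh)), zero_add, Finset.card_eq_one]
        obtain ⟨t, ht, hE⟩ := h.comp s cs hsE
        refine ⟨t, Finset.eq_singleton_iff_unique_mem.2 ⟨by simp [mF, hE, ht], ?_⟩⟩
        intro t' ht'
        rw [Finset.mem_filter, mF] at ht'
        by_contra hne
        have l := trip_linear h t' t ht'.1 hE hne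
        have hun : (t' ∪ t).card ≤ sᶜ.card := Finset.card_le_card (Finset.union_subset ht'.2 ht)
        have := Finset.card_union_add_card_inter t' t
        rw [h.card _ hE, h.card _ ht'.1] at this
        rw [Finset.card_compl, cs] at hun
        simp at hun
        omega
    have hs := Finset.sum_congr (rfl : Finset.powersetCard 3 (Finset.univ : Finset (Fin 7)) = _) hterm
    rw [Finset.sum_add_distrib] at hs
    have e1 : ∑ s ∈ Finset.powersetCard 3 (Finset.univ : Finset (Fin 7)), (if s ∈ F then 1 else 0)
        = F.card := by
      rw [← Finset.sum_filter, ← Finset.card_eq_sum_ones]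
      refine congrArg Finset.card ?_
      ext s
      simp only [Finset.mem_filter, Finset.mem_powersetCard, mF]
      exact ⟨fun hh => hh.2, fun hh => ⟨⟨Finset.subset_univ _, h.card s hh⟩, hh⟩⟩
    have e2 : ∑ s ∈ Finset.powersetCard 3 (Finset.univ : Finset (Fin 7)),
        (F.filter (fun t => t ⊆ sᶜ)).card = F.card * 4 := by
      have := Finset.sum_card_bipartiteAbove_eq_sum_card_bipartiteBelow
        (s := Finset.powersetCard 3 (Finset.univ : Finset (Fin 7))) (t := F) (fun s t => t ⊆ sᶜ)
      simp only [Finset.bipartiteAbove, Finset.bipartiteBelow] at this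
      rw [this, Finset.sum_const_nat]
      intro t ht
      have : (Finset.powersetCard 3 (Finset.univ : Finset (Fin 7))).filter (fun s => t ⊆ sᶜ) =
          Finset.powersetCard 3 tᶜ := by
        ext s
        simp only [Finset.mem_filter, Finset.mem_powersetCard, Finset.subset_univ, true_and]
        rw [Finset.subset_compl_comm]
        exact and_comm
      rw [this, Finset.card_powersetCard, Finset.card_compl, h.card t ((mF t).1 ht)]
      rfl
    rw [e1, e2] at hs
    have e3 : ∑ s ∈ Finset.powersetCard 3 (Finset.univ : Finset (Fin 7)), 1 = 35 := by
      rw [← Finset.card_eq_sum_ones, Finset.card_powersetCard]; rfl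
    rw [e3] at hs
    omega
  refine ⟨?_, ?_⟩
  · refine Eq.trans ?_ ((Set.ncard_coe_finset F).trans c7)
    refine congrArg Set.ncard ?_
    ext s; simp [mF]
  · have hle : ∀ P ∈ Finset.powersetCard 2 (Finset.univ : Finset (Fin 7)),
        (F.filter (fun t => P ⊆ t)).card ≤ 1 := by
      intro P hP
      have cP := (Finset.mem_powersetCard.1 hP).2
      rw [Finset.card_le_one]
      intro s hs t ht
      rw [Finset.mem_filter, mF] at hs ht
      by_contra hne
      have l := trip_linear h s t hs.1 ht.1 hne
      have := Finset.card_le_card (Finset.subset_inter hs.2 ht.2)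
      omega
    have hsum : ∑ P ∈ Finset.powersetCard 2 (Finset.univ : Finset (Fin 7)),
        (F.filter (fun t => P ⊆ t)).card = 
        ∑ P ∈ Finset.powersetCard 2 (Finset.univ : Finset (Fin 7)), 1 := by
      have := Finset.sum_card_bipartiteAbove_eq_sum_card_bipartiteBelow
        (s := Finset.powersetCard 2 (Finset.univ : Finset (Fin 7))) (t := F) (fun s t => s ⊆ t)
      simp only [Finset.bipartiteAbove, Finset.bipartiteBelow] at this
      rw [this, Finset.sum_const_nat (m := 3), c7, ← Finset.card_eq_sum_ones,
        Finset.card_powersetCard]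
      · rfl
      intro t ht
      have : (Finset.powersetCard 2 (Finset.univ : Finset (Fin 7))).filter (fun s => s ⊆ t) =
          Finset.powersetCard 2 t := by
        ext s
        simp only [Finset.mem_filter, Finset.mem_powersetCard, Finset.subset_univ, true_and]
        exact and_comm
      rw [this, Finset.card_powersetCard, h.card t ((mF t).1 ht)]
      rfl
    have heq := (Finset.sum_eq_sum_iff_of_le hle).1 hsum
    intro P hP
    have h1 := heq P (Finset.mem_powersetCard.2 ⟨Finset.subset_univ _, hP⟩)
    obtain ⟨A, hA⟩ := Finset.card_eq_one.1 h1
    have hm : ∀ t, (E t ∧ P ⊆ t) ↔ t = A := fun t => by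
      rw [← Finset.mem_singleton, ← hA, Finset.mem_filter, mF]
    exact ⟨A, (hm A).2 rfl, fun t ht => (hm t).1 ht⟩

end Comb


theorem stmt9 (Γ : Finset (Fin 7) → Prop)
    (hmono : Monotonic Γ) (hnc : NoCloning Γ) (hnr : NoRedundancy Γ)
    (hhom : ∀ A : Finset (Fin 7), IsMinimal Γ A → A.card = 3)
    (ψ : (Fin (7 + 1) → Fin 2) → ℂ) (hψ : IsPureQSSState Γ ψ) :
    {A : Finset (Fin 7) | IsMinimal Γ A}.ncard = 7 ∧
    ∀ P : Finset (Fin 7), P.card = 2 →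
      ∃! A : Finset (Fin 7), IsMinimal Γ A ∧ P ⊆ A :=
  trip_final (trip_of Γ hmono hnc hnr hhom ψ hψ)
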